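/- arXiv:1804.08441 — 2 statements merged into one kernel-verified Lean document; each statement's English description precedes it below -/
import Mathlib

section
/- For every real number m ≥ 1, let N(m) denote the number of pairs (n, s) with n ∈ ℕ and s a subset of {0, 1, …, n−3} (s = ∅ when n < 3) such that λⁿ − Σ_{i∈s} λⁱ ≤ m. Then (1/8)·m^{log 2 / log λ} ≤ N(m) ≤ 32·m^{log 2 / log λ}. -/
lemma aux_bounds (l : ℝ) (h : l ^ 3 - l - 2 = 0) : 1.52 < l ∧ l < 1.522 := by
  constructor
  · by_contra hc
    push Not at hc
    nlinarith [sq_nonneg (l + 0.76), sq_nonneg (l + 0.577), sq_nonneg l, mul_nonneg (sub_nonneg.2 hc) (sq_nonneg (l + 0.76))]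
  · by_contra hc
    push Not at hc
    nlinarith [mul_nonneg (sub_nonneg.2 hc) (sq_nonneg (l + 0.761))]

lemma aux_card (k : ℕ) : ∑ n ∈ Finset.range (k + 2), 2 ^ (n - 2) ≤ 2 ^ k + 1 := by
  induction k with
  | zero => simp [Finset.sum_range_succ]
  | succ k ih =>
    rw [show k + 1 + 2 = (k + 2) + 1 by ring, Finset.sum_range_succ, pow_succ]
    simp only [Nat.add_sub_cancel]
    omega

lemma aux_weight (l : ℝ) (h : l ^ 3 - l - 2 = 0) (n : ℕ) (s : Finset ℕ)
    (hs : s ⊆ Finset.range (n - 2)) : l ^ n ≤ l ^ 5 * (l ^ n - ∑ i ∈ s, l ^ i) := by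
  obtain ⟨h1, h2⟩ := aux_bounds l h
  have h0 : 0 < l := by linarith
  have hS : ∑ i ∈ s, l ^ i ≤ ∑ i ∈ Finset.range (n - 2), l ^ i :=
    Finset.sum_le_sum_of_subset_of_nonneg hs (fun i _ _ => by positivity)
  have h5 : 1 ≤ l ^ 5 := one_le_pow₀ (by linarith)
  have hg := geom_sum_mul l (n - 2)
  set S := ∑ i ∈ s, l ^ i
  set G := ∑ i ∈ Finset.range (n - 2), l ^ i
  suffices hh : l ^ n ≤ l ^ 5 * (l ^ n - G) by
    have : l ^ 5 * (l ^ n - G) ≤ l ^ 5 * (l ^ n - S) := by gcongr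
    linarith
  by_cases hn : n < 2
  · have : G = 0 := by
      have : n - 2 = 0 := by omega
      simp [G, this]
    rw [this, sub_zero]
    have : 0 < l ^ n := by positivity
    nlinarith
  · obtain ⟨j, rfl⟩ : ∃ j, n = j + 2 := ⟨n - 2, by omega⟩
    simp only [Nat.add_sub_cancel] at hg
    have hj : 0 < l ^ j := by positivity
    have e : (l - 1) * (l ^ 5 * (l ^ (j + 2) - G)) = l ^ 5 * (l ^ j * (1 + l - l ^ 2) + 1) := by
      have : (l - 1) * (l ^ (j + 2) - G) = l ^ j * (1 + l - l ^ 2) + 1 := by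
        rw [pow_add]
        linear_combination (-1) * hg + l ^ j * h
      rw [← this]; ring
    have k0 : l - 1 ≤ l ^ 3 * (1 + l - l ^ 2) := by
      have : l ^ 3 = l + 2 := by linarith
      rw [this]
      nlinarith
    have k1 : l ^ (j + 2) * (l - 1) ≤ l ^ (j + 2) * (l ^ 3 * (1 + l - l ^ 2)) := by gcongr
    have k2 : (l - 1) * l ^ (j + 2) ≤ (l - 1) * (l ^ 5 * (l ^ (j + 2) - G)) := by
      rw [e]
      have : l ^ 5 * (l ^ j * (1 + l - l ^ 2) + 1) = l ^ (j + 2) * (l ^ 3 * (1 + l - l ^ 2)) + l ^ 5 := by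
        ring
      linarith
    exact le_of_mul_le_mul_left k2 (by linarith)


/-- For `m ≥ 1` let `N(m)` be the number of pairs `(n, s)` with `n ∈ ℕ` and
`s ⊆ {0, 1, …, n−3}` (so `s = ∅` when `n < 3`) such that `λⁿ − Σ_{i∈s} λⁱ ≤ m`.
Then `(1/8) m^{log 2 / log λ} ≤ N(m) ≤ 32 m^{log 2 / log λ}`, where `λ` is the real
root of `t³ − t − 2`. -/
theorem stmt_13 (lam : ℝ) (hlam : lam ^ 3 - lam - 2 = 0) (m : ℝ) (hm : 1 ≤ m)
    (N : ℕ)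
    (hN : N = Nat.card {p : ℕ × Finset ℕ //
        p.2 ⊆ Finset.range (p.1 - 2) ∧ lam ^ p.1 - ∑ i ∈ p.2, lam ^ i ≤ m}) :
    (1 / 8 : ℝ) * m ^ (Real.log 2 / Real.log lam) ≤ (N : ℝ) ∧
    (N : ℝ) ≤ 32 * m ^ (Real.log 2 / Real.log lam) := by

  obtain ⟨h1, h2⟩ := aux_bounds lam hlam
  have h0 : 0 < lam := by linarith
  have hl1 : 1 < lam := by linarith
  obtain ⟨k, hk1, hk2⟩ := exists_nat_pow_near hm hl1
  set θ := Real.log 2 / Real.log lam with hθ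
  have hlog : 0 < Real.log lam := Real.log_pos hl1
  have hθ0 : 0 ≤ θ := div_nonneg (Real.log_nonneg (by norm_num)) hlog.le
  have hlt : lam ^ θ = 2 := by
    rw [Real.rpow_def_of_pos h0, hθ, mul_div_cancel₀ _ hlog.ne', Real.exp_log (by norm_num)]
  have hpow : ∀ j : ℕ, (lam ^ j) ^ θ = 2 ^ j := by
    intro j
    rw [← Real.rpow_natCast, ← Real.rpow_mul h0.le, mul_comm, Real.rpow_mul h0.le, hlt,
      Real.rpow_natCast]
  have hlow : (2 : ℝ) ^ k ≤ m ^ θ := by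
    rw [← hpow]; exact Real.rpow_le_rpow (by positivity) hk1 hθ0
  have hupp : m ^ θ ≤ 2 ^ (k + 1) := by
    rw [← hpow]; exact Real.rpow_le_rpow (by linarith) hk2.le hθ0
  set P : Set (ℕ × Finset ℕ) := {p | p.2 ⊆ Finset.range (p.1 - 2) ∧
    lam ^ p.1 - ∑ i ∈ p.2, lam ^ i ≤ m} with hP
  have hN' : N = P.ncard := hN
  let A : Finset (ℕ × Finset ℕ) := ((Finset.range (k + 4 + 2)).sigma
    (fun n => (Finset.range (n - 2)).powerset)).image (fun x => (x.1, x.2))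
  have hPA : P ⊆ (A : Set (ℕ × Finset ℕ)) := by
    rintro ⟨n, s⟩ ⟨hs, hw⟩
    simp only at hs hw
    have hn := aux_weight lam hlam n s hs
    have : lam ^ n < lam ^ (k + 6) := by
      calc lam ^ n ≤ lam ^ 5 * (lam ^ n - ∑ i ∈ s, lam ^ i) := hn
        _ ≤ lam ^ 5 * m := by gcongr
        _ < lam ^ 5 * lam ^ (k + 1) := by gcongr
        _ = lam ^ (k + 6) := by ring
    have hnk : n < k + 6 := (pow_lt_pow_iff_right₀ hl1).1 this
    simp only [A, Finset.coe_image, Set.mem_image, Finset.mem_coe, Finset.mem_sigma,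
      Finset.mem_range, Finset.mem_powerset]
    exact ⟨⟨n, s⟩, ⟨hnk, hs⟩, rfl⟩
  have hA : A.card ≤ 2 ^ (k + 4) + 1 := by
    refine Finset.card_image_le.trans ?_
    rw [Finset.card_sigma]
    simp only [Finset.card_powerset, Finset.card_range]
    exact aux_card (k + 4)
  have hNA : N ≤ 2 ^ (k + 4) + 1 := by
    rw [hN']
    refine (Set.ncard_le_ncard hPA A.finite_toSet).trans ?_
    rw [Set.ncard_coe_finset]; exact hA
  have hfin : P.Finite := A.finite_toSet.subset hPA
  let B : Finset (ℕ × Finset ℕ) := (Finset.range (k - 2)).powerset.image (fun s => (k, s))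
  have hBP : (B : Set (ℕ × Finset ℕ)) ⊆ P := by
    intro p hp
    simp only [B, Finset.coe_image, Set.mem_image, Finset.mem_coe, Finset.mem_powerset] at hp
    obtain ⟨s, hs, rfl⟩ := hp
    refine ⟨hs, ?_⟩
    have : 0 ≤ ∑ i ∈ s, lam ^ i := Finset.sum_nonneg (fun i _ => by positivity)
    simp only
    linarith
  have hB : B.card = 2 ^ (k - 2) := by
    rw [Finset.card_image_of_injective _ (fun a b h => (Prod.mk.inj h).2)]
    simp
  have hNB : 2 ^ (k - 2) ≤ N := by
    rw [hN', ← hB, ← Set.ncard_coe_finset]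
    exact Set.ncard_le_ncard hBP hfin
  constructor
  · have c1 : ((2 : ℝ) ^ (k - 2)) ≤ N := by exact_mod_cast hNB
    have c2 : (2 : ℝ) ^ (k + 1) ≤ 2 ^ ((k - 2) + 3) :=
      pow_le_pow_right₀ (by norm_num) (by omega)
    rw [pow_add _ (k - 2) 3] at c2
    linarith
  · have c1 : (N : ℝ) ≤ 2 ^ (k + 4) + 1 := by exact_mod_cast hNA
    have c2 : (1 : ℝ) ≤ 2 ^ k := one_le_pow₀ (by norm_num)
    rw [pow_add] at c1
    linarith
end

section
/- For every i ≥ 0, the pivot operators satisfy, as equalities of K-linear endomorphisms of the Grassmann algebra Λ: (i) v_i ∘ v_i = x_{i+1} ∘ v_{i+3}; (ii) v_i ∘ v_{i+1} + v_{i+1} ∘ v_i = −x_i ∘ v_{i+3}; (iii) v_i² ∘ v_{i+1} − v_{i+1} ∘ v_i² = −v_{i+3}; (iv) v_i ∘ v_{i+2} + v_{i+2} ∘ v_i = −x_i ∘ x_{i+1} ∘ x_{i+2} ∘ v_{i+5}. -/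
/-- The Grassmann algebra `Λ(x_i ∣ i ≥ 0)`: the exterior algebra over `K` of the free
`K`-module with basis indexed by `ℕ`. -/
noncomputable abbrev GrassmannAlgebra (K : Type*) [Field K] :=
  ExteriorAlgebra K (ℕ →₀ K)

/-- The `i`-th Grassmann generator `x_i ∈ Λ`. -/
noncomputable def grassGen (K : Type*) [Field K] (i : ℕ) : GrassmannAlgebra K :=
  ExteriorAlgebra.ι K (Finsupp.single i 1)

/-- The operator of left multiplication by `x_i` on `Λ`. -/
noncomputable def grassMul (K : Type*) [Field K] (i : ℕ) :
    Module.End K (GrassmannAlgebra K) :=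
  LinearMap.mulLeft K (grassGen K i)

theorem grass_exists_bound (K : Type*) [Field K] (w : GrassmannAlgebra K) :
    ∃ n : ℕ, w ∈ Algebra.adjoin K (grassGen K '' {j : ℕ | j < n}) := by
  have mono : ∀ {m n : ℕ}, m ≤ n → Algebra.adjoin K (grassGen K '' {j : ℕ | j < m}) ≤
      Algebra.adjoin K (grassGen K '' {j : ℕ | j < n}) := fun h =>
    Algebra.adjoin_mono (Set.image_mono fun j (hj : j < _) => lt_of_lt_of_le hj h)
  induction w using ExteriorAlgebra.induction with
  | algebraMap r => exact ⟨0, Subalgebra.algebraMap_mem _ r⟩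
  | ι f =>
    induction f using Finsupp.induction_linear with
    | zero => exact ⟨0, by simp⟩
    | add f g hf hg =>
      obtain ⟨m, hm⟩ := hf
      obtain ⟨n, hn⟩ := hg
      refine ⟨max m n, ?_⟩
      rw [map_add]
      exact add_mem (mono (le_max_left _ _) hm) (mono (le_max_right _ _) hn)
    | single i r =>
      refine ⟨i + 1, ?_⟩
      have h : (Finsupp.single i r : ℕ →₀ K) = r • Finsupp.single i 1 := by simp
      rw [h, map_smul]
      have hm : grassGen K i ∈ grassGen K '' {j : ℕ | j < i + 1} :=
        ⟨i, Nat.lt_succ_self i, rfl⟩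
      exact Subalgebra.smul_mem _ (Algebra.subset_adjoin hm) r
  | mul a b ha hb =>
    obtain ⟨m, hm⟩ := ha
    obtain ⟨n, hn⟩ := hb
    exact ⟨max m n, mul_mem (mono (le_max_left _ _) hm) (mono (le_max_right _ _) hn)⟩
  | add a b ha hb =>
    obtain ⟨m, hm⟩ := ha
    obtain ⟨n, hn⟩ := hb
    exact ⟨max m n, add_mem (mono (le_max_left _ _) hm) (mono (le_max_right _ _) hn)⟩

theorem grass_vanish (K : Type*) [Field K] (F : ℕ → Module.End K (GrassmannAlgebra K)) (i : ℕ)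
    (hF : ∀ j, i < j → F j = grassMul K j * grassMul K (j + 1) * F (j + 3))
    (h0 : ∀ w, ∃ n, ∀ j, n ≤ j → F j w = 0) : ∀ j, i < j → F j = 0 := by
  intro j hj
  refine LinearMap.ext fun w => ?_
  change F j w = 0
  obtain ⟨n, hn⟩ := h0 w
  have key : ∀ k j, i < j → n ≤ j + 3 * k → F j w = 0 := by
    intro k
    induction k with
    | zero => intro j _ h; exact hn j (by omega)
    | succ k ih =>
      intro j hj h
      rw [hF j hj, Module.End.mul_apply, ih (j + 3) (by omega) (by omega), map_zero]
  exact key n j hj (by omega)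

theorem grassMul_sq (K : Type*) [Field K] (i : ℕ) : grassMul K i * grassMul K i = 0 := by
  refine LinearMap.ext fun w => ?_
  simp [grassMul, grassGen, ← mul_assoc]

theorem grassMul_anti (K : Type*) [Field K] (i j : ℕ) :
    grassMul K i * grassMul K j + grassMul K j * grassMul K i = 0 := by
  refine LinearMap.ext fun w => ?_
  simp only [grassMul, grassGen, LinearMap.add_apply, Module.End.mul_apply,
    LinearMap.mulLeft_apply, ← mul_assoc, ← add_mul, LinearMap.zero_apply]
  rw [ExteriorAlgebra.ι_add_mul_swap, zero_mul]



theorem grass_central (K : Type*) [Field K] (T : Module.End K (GrassmannAlgebra K))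
    (hT : ∀ j, T * grassMul K j = grassMul K j * T) (h1 : T 1 = 0) : T = 0 := by
  have key : ∀ w z : GrassmannAlgebra K, T (w * z) = w * T z := by
    intro w
    induction w using ExteriorAlgebra.induction with
    | algebraMap r => intro z; simp [← Algebra.smul_def]
    | ι f =>
      induction f using Finsupp.induction_linear with
      | zero => intro z; simp
      | add f g hf hg => intro z; rw [map_add, add_mul, map_add, hf, hg, add_mul]
      | single i r =>
        intro z
        have h : (Finsupp.single i r : ℕ →₀ K) = r • Finsupp.single i 1 := by simp
        rw [h, map_smul, smul_mul_assoc, map_smul, smul_mul_assoc]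
        congr 1
        exact LinearMap.congr_fun (hT i) z
    | mul a b ha hb => intro z; rw [mul_assoc, ha, hb, mul_assoc]
    | add a b ha hb => intro z; rw [add_mul, map_add, ha, hb, add_mul]
  refine LinearMap.ext fun w => ?_
  have := key w 1
  rw [mul_one, h1, mul_zero] at this
  exact this

/-- Basic products of the pivot operators `v_i = ∂_i + x_i x_{i+1} v_{i+3}` acting on
the Grassmann algebra `Λ`: `v_i² = x_{i+1} v_{i+3}`, `[v_i, v_{i+1}] = −x_i v_{i+3}`,
`[v_i², v_{i+1}] = −v_{i+3}`, `[v_i, v_{i+2}] = −x_i x_{i+1} x_{i+2} v_{i+5}`.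
Here `∂_i` is the contraction characterized by `∂_i x_j + x_j ∂_i = δ_{ij}`, `∂_i(1)=0`,
`∂_i ∂_j + ∂_j ∂_i = 0`, and the pivot operators `v_i` are characterized by the
recursion `v_i = ∂_i + x_i x_{i+1} v_{i+3}` together with the fact that `v_i` kills the
subalgebra generated by the `x_j` with `j < i`.  Products in `Module.End` are
compositions of operators. -/
theorem stmt_16 (K : Type*) [Field K]
    (d v : ℕ → Module.End K (GrassmannAlgebra K))
    (hd : ∀ i j : ℕ, d i * grassMul K j + grassMul K j * d i = if i = j then 1 else 0)
    (hd1 : ∀ i : ℕ, d i (1 : GrassmannAlgebra K) = 0)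
    (hdd : ∀ i j : ℕ, d i * d j + d j * d i = 0)
    (hv : ∀ i : ℕ, v i = d i + grassMul K i * grassMul K (i + 1) * v (i + 3))
    (hv0 : ∀ i : ℕ, ∀ w ∈ Algebra.adjoin K (grassGen K '' {j : ℕ | j < i}), v i w = 0) :
    ∀ i : ℕ,
      v i * v i = grassMul K (i + 1) * v (i + 3) ∧
      v i * v (i + 1) + v (i + 1) * v i = -(grassMul K i * v (i + 3)) ∧
      (v i * v i) * v (i + 1) - v (i + 1) * (v i * v i) = -(v (i + 3)) ∧
      v i * v (i + 2) + v (i + 2) * v i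
        = -(grassMul K i * grassMul K (i + 1) * grassMul K (i + 2) * v (i + 5)) := by
  have ev : ∀ w, ∃ n, ∀ j, n ≤ j → v j w = 0 := by
    intro w
    obtain ⟨n, hn⟩ := grass_exists_bound K w
    exact ⟨n, fun j hj => hv0 j w (Algebra.adjoin_mono
      (Set.image_mono fun k (hk : k < n) => lt_of_lt_of_le hk hj) hn)⟩
  have ev2 : ∀ (T : Module.End K (GrassmannAlgebra K)) (w), ∃ n, ∀ j, n ≤ j →
      (T * v j + v j * T) w = 0 := by
    intro T w
    obtain ⟨m, hm⟩ := ev w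
    obtain ⟨n, hn⟩ := ev (T w)
    refine ⟨max m n, fun j hj => ?_⟩
    rw [LinearMap.add_apply, Module.End.mul_apply, Module.End.mul_apply,
      hm j (le_trans (le_max_left _ _) hj), hn j (le_trans (le_max_right _ _) hj),
      map_zero, add_zero]
  have hdx : ∀ i j, i ≠ j → d i * grassMul K j + grassMul K j * d i = 0 := by
    intro i j h
    rw [hd, if_neg h]
  have hdxs : ∀ i, d i * grassMul K i + grassMul K i * d i = 1 := by
    intro i
    rw [hd, if_pos rfl]
  have sx := grassMul_anti K
  have sq := grassMul_sq K
  have dsq : ∀ i, d i * d i = 0 := by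
    intro i
    apply grass_central K
    · intro j
      have h := hd i j
      by_cases hij : i = j
      · subst hij
        have h := hdxs i
        linear_combination (norm := noncomm_ring) d i * h - h * d i
      · have h := hdx i j hij
        linear_combination (norm := noncomm_ring) d i * h - h * d i
    · rw [Module.End.mul_apply, hd1, map_zero]
  set x := grassMul K with hx
  have X : ∀ i j, i < j → x i * v j + v j * x i = 0 := by
    intro i
    refine grass_vanish K (fun j => x i * v j + v j * x i) i (fun j hj => ?_) (ev2 (x i))
    change x i * v j + v j * x i = x j * x (j + 1) * (x i * v (j + 3) + v (j + 3) * x i)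
    rw [hv j]
    linear_combination (norm := noncomm_ring) hdx j i (by omega) + sx i j * x (j + 1) * v (j + 3)
      - x j * sx i (j + 1) * v (j + 3)
  have A : ∀ i j, i < j → d i * v j + v j * d i = 0 := by
    intro i
    refine grass_vanish K (fun j => d i * v j + v j * d i) i (fun j hj => ?_) (ev2 (d i))
    change d i * v j + v j * d i = x j * x (j + 1) * (d i * v (j + 3) + v (j + 3) * d i)
    rw [hv j]
    linear_combination (norm := noncomm_ring) hdd i j
      + hdx i j (by omega) * x (j + 1) * v (j + 3)
      - x j * hdx i (j + 1) (by omega) * v (j + 3)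
  clear ev ev2 hv0 hd1 hd
  clear_value x
  have X0 : ∀ i, x i * v i + v i * x i = 1 := by
    intro i
    rw [hv i]
    linear_combination (norm := noncomm_ring) hdxs i + sq i * x (i + 1) * v (i + 3)
      + x i * x (i + 1) * X i (i + 3) (by omega) - x i * sx i (i + 1) * v (i + 3)
      + sq i * x (i + 1) * v (i + 3)
  have P1 : ∀ i, v i * v i = x (i + 1) * v (i + 3) := by
    intro i
    rw [hv i]
    linear_combination (norm := noncomm_ring) dsq i + hdxs i * x (i + 1) * v (i + 3)
      - x i * hdx i (i + 1) (by omega) * v (i + 3)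
      + x i * x (i + 1) * A i (i + 3) (by omega)
      + x i * x (i + 1) * X i (i + 3) (by omega) * x (i + 1) * v (i + 3)
      - x i * sx i (i + 1) * v (i + 3) * x (i + 1) * v (i + 3)
      + sq i * x (i + 1) * v (i + 3) * x (i + 1) * v (i + 3)
  have Q : ∀ i, x i * x (i + 1) * (v (i + 3) * v (i + 1) + v (i + 1) * v (i + 3)) = 0 := by
    intro i
    have e : v (i + 1) = d (i + 1) + x (i + 1) * x (i + 2) * v (i + 4) := hv (i + 1)
    rw [e]
    linear_combination (norm := noncomm_ring) x i * x (i + 1) * A (i + 1) (i + 3) (by omega)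
      + x i * x (i + 1) * X (i + 1) (i + 3) (by omega) * x (i + 2) * v (i + 4)
      - x i * sq (i + 1) * v (i + 3) * x (i + 2) * v (i + 4)
      + x i * sq (i + 1) * x (i + 2) * v (i + 4) * v (i + 3)
  have P2 : ∀ i, v i * v (i + 1) + v (i + 1) * v i = -(x i * v (i + 3)) := by
    intro i
    rw [hv i]
    linear_combination (norm := noncomm_ring) A i (i + 1) (by omega)
      + X i (i + 1) (by omega) * x (i + 1) * v (i + 3) - x i * X0 (i + 1) * v (i + 3) + Q i
  have P4 : ∀ i, v i * v (i + 2) + v (i + 2) * v i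
      = -(x i * x (i + 1) * x (i + 2) * v (i + 5)) := by
    intro i
    have e : v (i + 2) * v (i + 3) + v (i + 3) * v (i + 2) + x (i + 2) * v (i + 5) = 0 := by
      rw [← sub_neg_eq_add]
      exact sub_eq_zero.mpr (P2 (i + 2))
    rw [hv i]
    linear_combination (norm := noncomm_ring) A i (i + 2) (by omega)
      + x i * x (i + 1) * e + X i (i + 2) (by omega) * x (i + 1) * v (i + 3)
      - x i * X (i + 1) (i + 2) (by omega) * v (i + 3)
  intro i
  refine ⟨P1 i, P2 i, ?_, P4 i⟩
  have e : v (i + 1) * v (i + 3) + v (i + 3) * v (i + 1)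
      + x (i + 1) * x (i + 2) * x (i + 3) * v (i + 6) = 0 := by
    rw [← sub_neg_eq_add]
    exact sub_eq_zero.mpr (P4 (i + 1))
  rw [P1 i]
  linear_combination (norm := noncomm_ring) x (i + 1) * e - X0 (i + 1) * v (i + 3)
    - sq (i + 1) * x (i + 2) * x (i + 3) * v (i + 6)
end
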